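/- arXiv:1809.09814 — 2 statements merged into one kernel-verified Lean document; each statement's English description precedes it below -/
import Mathlib

section
/- Theorem 1 (feasibility preservation of the penalized convex relaxation): Suppose the BMI feasible set F is nonempty, x̌ ∈ F satisfies the MFCQ condition, and C ∈ {C₁, C₂, C₃}. Then there exists η₀ > 0 such that for every η ≥ η₀, the penalized convex relaxation (R_{η,C}) has an optimal solution (x*, X*) which is unique (every optimal solution of (R_{η,C}) equals (x*, X*)), and this solution satisfies X* = x* x*ᵀ and cᵀx* ≤ cᵀx̌. -/
/-!
Write `H = X - xxᵀ`. The objective of the relaxation is `cᵀx + η (‖x - x̌‖² + tr H)`, and all three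
cones lie in `C₃`, on which `tr H` dominates every `|Hᵢⱼ|`; so `t = tr H` measures the relaxation
gap, and `t = 0` forces `X = xxᵀ`.

For large `η` a point with `t > 0` is strictly beaten by a point of the form `(y, yyᵀ)`. Indeed, a
point `(x, X)` at least as good as `x̌` satisfies `‖x - x̌‖ = O(1/η)` and `t = O(1/η²)`, so `(x, t)`
is close to `(x̌, 0)`, where the MFCQ direction `b` still works because positive definiteness is an
open condition. Since `p(x, X) ⪯ 0`, the matrix `p(x, xxᵀ)` is at most `O(t) I`, and a step of
length proportional to `t` along `b` restores feasibility for the original problem. That step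
changes the linear term by `O(t)`, uniformly in `η`, and the quadratic penalty by `o(η t)`, while
it saves `η t`.

Existence of an optimum thus reduces to minimizing the coercive function `cᵀx + η ‖x - x̌‖²` over
the closed set `F`. For uniqueness, the midpoint of two optimal solutions `(x, xxᵀ)`, `(y, yyᵀ)` is
again optimal with gap `vvᵀ`, `v = (x - y) / 2`, so `v = 0`. Comparison with `x̌` gives
`cᵀx* ≤ cᵀx̌`.
-/

open Matrix

noncomputable section

/-- Euclidean (ℓ₂) norm of a finite real vector. -/
def vecNorm {k : ℕ} (u : Fin k → ℝ) : ℝ := Real.sqrt (∑ i, u i ^ 2)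

/-- The matrix pencil `p(x, X) = F₀ + ∑ₖ xₖ Kₖ + ∑ᵢ ∑ⱼ Xᵢⱼ Lᵢⱼ`. -/
def pencil {n m : ℕ} (F0 : Matrix (Fin m) (Fin m) ℝ)
    (K : Fin n → Matrix (Fin m) (Fin m) ℝ)
    (L : Fin n → Fin n → Matrix (Fin m) (Fin m) ℝ)
    (x : Fin n → ℝ) (X : Matrix (Fin n) (Fin n) ℝ) : Matrix (Fin m) (Fin m) ℝ :=
  F0 + ∑ k, x k • K k + ∑ i, ∑ j, X i j • L i j

/-- Negative semidefinite real matrix. -/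
def NegSemidef' {k : ℕ} (A : Matrix (Fin k) (Fin k) ℝ) : Prop := (-A).PosSemidef

/-- Negative definite real matrix. -/
def NegDef' {k : ℕ} (A : Matrix (Fin k) (Fin k) ℝ) : Prop := (-A).PosDef

/-- The BMI feasible set `F = {x : p(x, xxᵀ) ⪯ 0}`. -/
def feasSet {n m : ℕ} (F0 : Matrix (Fin m) (Fin m) ℝ)
    (K : Fin n → Matrix (Fin m) (Fin m) ℝ)
    (L : Fin n → Fin n → Matrix (Fin m) (Fin m) ℝ) : Set (Fin n → ℝ) :=
  {x | NegSemidef' (pencil F0 K L x (vecMulVec x x))}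

/-- Feasibility distance `d_F(x) = inf {‖x − a‖₂ : a ∈ F}`. -/
def distF {n m : ℕ} (F0 : Matrix (Fin m) (Fin m) ℝ)
    (K : Fin n → Matrix (Fin m) (Fin m) ℝ)
    (L : Fin n → Fin n → Matrix (Fin m) (Fin m) ℝ) (x : Fin n → ℝ) : ℝ :=
  sInf {r | ∃ a ∈ feasSet F0 K L, r = vecNorm (x - a)}

/-- `δₖ(x) = 2 ∑ᵢ xᵢ L_{k i}`. -/
def deltaMat {n m : ℕ} (L : Fin n → Fin n → Matrix (Fin m) (Fin m) ℝ)
    (k : Fin n) (x : Fin n → ℝ) : Matrix (Fin m) (Fin m) ℝ :=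
  (2 : ℝ) • ∑ i, x i • L k i

/-- The MFCQ condition at a point `x`. -/
def MFCQ {n m : ℕ} (F0 : Matrix (Fin m) (Fin m) ℝ)
    (K : Fin n → Matrix (Fin m) (Fin m) ℝ)
    (L : Fin n → Fin n → Matrix (Fin m) (Fin m) ℝ) (x : Fin n → ℝ) : Prop :=
  ∃ b : Fin n → ℝ,
    NegDef' (pencil F0 K L x (vecMulVec x x) + ∑ k, b k • (K k + deltaMat L k x))

/-- Smallest eigenvalue of a symmetric real matrix, via the Rayleigh quotient. -/
def lambdaMin {k : ℕ} (A : Matrix (Fin k) (Fin k) ℝ) : ℝ :=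
  sInf {r | ∃ u : Fin k → ℝ, vecNorm u = 1 ∧ r = u ⬝ᵥ (A *ᵥ u)}

/-- The G-MFCQ function `s(x)`. -/
def sFun {n m : ℕ} (K : Fin n → Matrix (Fin m) (Fin m) ℝ)
    (L : Fin n → Fin n → Matrix (Fin m) (Fin m) ℝ) (x : Fin n → ℝ) : ℝ :=
  sSup {r | ∃ b : Fin n → ℝ, vecNorm b = 1 ∧
    r = lambdaMin (-(∑ k, b k • (K k + deltaMat L k x)))}

/-- Spectral norm of a real matrix. -/
def specNorm {k : ℕ} (A : Matrix (Fin k) (Fin k) ℝ) : ℝ :=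
  sSup {r | ∃ v : Fin k → ℝ, vecNorm v = 1 ∧ r = vecNorm (A *ᵥ v)}

/-- Pencil norm `‖p‖₂`. -/
def pencilNorm {n m : ℕ} (L : Fin n → Fin n → Matrix (Fin m) (Fin m) ℝ) : ℝ :=
  sSup {r | ∃ u : Fin m → ℝ, vecNorm u = 1 ∧
    r = specNorm (Matrix.of fun i j => u ⬝ᵥ (L i j *ᵥ u))}

/-- Cone `C₁`: positive semidefinite matrices. -/
def coneC1 (n : ℕ) : Set (Matrix (Fin n) (Fin n) ℝ) := {H | H.PosSemidef}

/-- Cone `C₂`: symmetric matrices with `Hᵢᵢ ≥ 0` and `Hᵢᵢ Hⱼⱼ ≥ Hᵢⱼ²`. -/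
def coneC2 (n : ℕ) : Set (Matrix (Fin n) (Fin n) ℝ) :=
  {H | H.IsSymm ∧ ∀ i j, 0 ≤ H i i ∧ H i j ^ 2 ≤ H i i * H j j}

/-- Cone `C₃`: symmetric matrices with `Hᵢᵢ ≥ 0` and `Hᵢᵢ + Hⱼⱼ ≥ 2|Hᵢⱼ|`. -/
def coneC3 (n : ℕ) : Set (Matrix (Fin n) (Fin n) ℝ) :=
  {H | H.IsSymm ∧ ∀ i j, 0 ≤ H i i ∧ 2 * |H i j| ≤ H i i + H j j}

/-- Dual cone with respect to the trace inner product. -/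
def dualCone {n : ℕ} (C : Set (Matrix (Fin n) (Fin n) ℝ)) :
    Set (Matrix (Fin n) (Fin n) ℝ) :=
  {Y | Y.IsSymm ∧ ∀ H ∈ C, 0 ≤ (Y * H).trace}

/-- `α(Λ)` : the n×n matrix with entries `⟨Lᵢⱼ, Λ⟩ = tr(Lᵢⱼ Λ)`. -/
def alphaMat {n m : ℕ} (L : Fin n → Fin n → Matrix (Fin m) (Fin m) ℝ)
    (Λ : Matrix (Fin m) (Fin m) ℝ) : Matrix (Fin n) (Fin n) ℝ :=
  Matrix.of fun i j => (L i j * Λ).trace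

/-- Objective of the penalized problem `(P_η)`. -/
def penObj {n : ℕ} (c xc : Fin n → ℝ) (η : ℝ) (x : Fin n → ℝ) : ℝ :=
  c ⬝ᵥ x + η * vecNorm (x - xc) ^ 2

/-- `x` is an optimal solution of the penalized problem `(P_η)`. -/
def IsOptPen {n m : ℕ} (F0 : Matrix (Fin m) (Fin m) ℝ)
    (K : Fin n → Matrix (Fin m) (Fin m) ℝ)
    (L : Fin n → Fin n → Matrix (Fin m) (Fin m) ℝ)
    (c xc : Fin n → ℝ) (η : ℝ) (x : Fin n → ℝ) : Prop :=
  x ∈ feasSet F0 K L ∧ ∀ y ∈ feasSet F0 K L, penObj c xc η x ≤ penObj c xc η y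

/-- Objective of the penalized convex relaxation `(R_{η,C})`. -/
def relObj {n : ℕ} (c xc : Fin n → ℝ) (η : ℝ) (x : Fin n → ℝ)
    (X : Matrix (Fin n) (Fin n) ℝ) : ℝ :=
  c ⬝ᵥ x + η * (X.trace - 2 * (xc ⬝ᵥ x) + xc ⬝ᵥ xc)

/-- Feasibility for the relaxation with cone `C`. -/
def RelFeasible {n m : ℕ} (F0 : Matrix (Fin m) (Fin m) ℝ)
    (K : Fin n → Matrix (Fin m) (Fin m) ℝ)
    (L : Fin n → Fin n → Matrix (Fin m) (Fin m) ℝ)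
    (C : Set (Matrix (Fin n) (Fin n) ℝ))
    (x : Fin n → ℝ) (X : Matrix (Fin n) (Fin n) ℝ) : Prop :=
  X.IsSymm ∧ NegSemidef' (pencil F0 K L x X) ∧ X - vecMulVec x x ∈ C

/-- `(x, X)` is an optimal solution of the penalized convex relaxation `(R_{η,C})`. -/
def IsOptRel {n m : ℕ} (F0 : Matrix (Fin m) (Fin m) ℝ)
    (K : Fin n → Matrix (Fin m) (Fin m) ℝ)
    (L : Fin n → Fin n → Matrix (Fin m) (Fin m) ℝ)
    (c xc : Fin n → ℝ) (η : ℝ) (C : Set (Matrix (Fin n) (Fin n) ℝ))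
    (x : Fin n → ℝ) (X : Matrix (Fin n) (Fin n) ℝ) : Prop :=
  RelFeasible F0 K L C x X ∧
    ∀ y Y, RelFeasible F0 K L C y Y → relObj c xc η x X ≤ relObj c xc η y Y

/-- The KKT conditions for `(P_η)` at `(x, Λ)`. -/
def KKT {n m : ℕ} (F0 : Matrix (Fin m) (Fin m) ℝ)
    (K : Fin n → Matrix (Fin m) (Fin m) ℝ)
    (L : Fin n → Fin n → Matrix (Fin m) (Fin m) ℝ)
    (c xc : Fin n → ℝ) (η : ℝ)
    (x : Fin n → ℝ) (Λ : Matrix (Fin m) (Fin m) ℝ) : Prop :=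
  Λ.IsSymm ∧ Λ.PosSemidef ∧
  c + (2 * η) • (x - xc) + (∑ k, ((K k * Λ).trace) • (Pi.single k 1 : Fin n → ℝ))
      + (2 : ℝ) • (alphaMat L Λ *ᵥ x) = 0 ∧
  Λ * pencil F0 K L x (vecMulVec x x) = 0

open Filter Topology

section LoewnerOrder

open scoped MatrixOrder Matrix.Norms.L2Operator

variable {ι : Type*}

lemma isClosed_setOf_posSemidef [Finite ι] : IsClosed {A : Matrix ι ι ℝ | A.PosSemidef} := by
  have := Fintype.ofFinite ι
  simp only [posSemidef_iff_dotProduct_mulVec, IsHermitian, Set.ofPred_and, Set.ofPred_forall]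
  refine .inter (isClosed_eq (by fun_prop) continuous_id) (isClosed_iInter fun u => ?_)
  exact isClosed_le continuous_const (by fun_prop)

lemma le_norm_smul_one [Fintype ι] [DecidableEq ι] {A : Matrix ι ι ℝ} (hA : A.IsHermitian) :
    A ≤ ‖A‖ • (1 : Matrix ι ι ℝ) := by
  rw [← Algebra.algebraMap_eq_smul_one]
  cases isEmpty_or_nonempty ι
  · exact (Subsingleton.elim _ _).le
  · exact le_algebraMap_of_spectrum_le (ha := hA.isSelfAdjoint) fun r hr =>
      (Real.le_norm_self r).trans (spectrum.norm_le_norm_of_mem hr)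

lemma exists_pos_smul_one_le [Finite ι] [DecidableEq ι] {A : Matrix ι ι ℝ} (hA : A.PosDef) :
    ∃ ε > (0 : ℝ), ε • (1 : Matrix ι ι ℝ) ≤ A := by
  have := Fintype.ofFinite ι
  cases isEmpty_or_nonempty ι
  · exact ⟨1, one_pos, (Subsingleton.elim _ _).le⟩
  · simpa only [Algebra.algebraMap_eq_smul_one] using
      (CFC.exists_pos_algebraMap_le_iff hA.isHermitian.isSelfAdjoint).2
        fun _ hx => hA.isStrictlyPositive.spectrum_pos hx

lemma eventually_nhds_posDef [Finite ι] {A : Matrix ι ι ℝ} (hA : A.PosDef) :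
    ∀ᶠ B in 𝓝 A, B.IsHermitian → B.PosDef := by
  classical
  have := Fintype.ofFinite ι
  obtain ⟨ε, hε, hεA⟩ := exists_pos_smul_one_le hA
  filter_upwards [Metric.ball_mem_nhds A hε] with B hB hBsymm
  rw [mem_ball_iff_norm'] at hB
  have hmargin : (ε - ‖A - B‖) • (1 : Matrix ι ι ℝ) ≤ B := calc
    (ε - ‖A - B‖) • (1 : Matrix ι ι ℝ) = ε • 1 - ‖A - B‖ • 1 := sub_smul ..
    _ ≤ A - (A - B) := sub_le_sub hεA (le_norm_smul_one (hA.isHermitian.sub hBsymm))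
    _ = B := sub_sub_cancel A B
  simpa using (PosDef.one.smul (sub_pos.2 hB)).add_posSemidef (le_iff.1 hmargin)

lemma exists_pos_posDef_sub_mul_smul_one [Finite ι] [DecidableEq ι] {A : Matrix ι ι ℝ}
    (hA : A.PosDef) (r : ℝ) :
    ∃ σ > 0, (A - (σ * r) • (1 : Matrix ι ι ℝ)).PosDef := by
  have hlim : Tendsto (fun σ : ℝ => A - (σ * r) • (1 : Matrix ι ι ℝ)) (𝓝[>] 0) (𝓝 A) := by
    refine Tendsto.mono_left (Continuous.tendsto' (by fun_prop) _ _ ?_) nhdsWithin_le_nhds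
    simp
  obtain ⟨σ, hσ, hσpos⟩ :=
    ((hlim.eventually (eventually_nhds_posDef hA)).and self_mem_nhdsWithin).exists
  exact ⟨σ, hσpos, hσ (hA.isHermitian.sub (isHermitian_one.smul (.all _)))⟩

lemma negSemidef_iff_nonpos {k : ℕ} {A : Matrix (Fin k) (Fin k) ℝ} : NegSemidef' A ↔ A ≤ 0 := by
  rw [le_iff, zero_sub, NegSemidef']

end LoewnerOrder

section EuclideanNorm

variable {k : ℕ} (u v : Fin k → ℝ)

lemma vecNorm_sq : vecNorm u ^ 2 = u ⬝ᵥ u := by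
  rw [vecNorm, Real.sq_sqrt (by positivity)]
  simp [dotProduct, sq]

lemma vecNorm_eq_norm_toLp : vecNorm u = ‖WithLp.toLp 2 u‖ := by
  simp [vecNorm, EuclideanSpace.norm_eq]

lemma abs_dotProduct_le_vecNorm_mul : |u ⬝ᵥ v| ≤ vecNorm u * vecNorm v := by
  simpa [vecNorm_eq_norm_toLp, EuclideanSpace.inner_eq_star_dotProduct, dotProduct_comm] using
    abs_real_inner_le_norm (WithLp.toLp 2 u) (WithLp.toLp 2 v)

/-- The ambient norm on `Fin k → ℝ` is the sup norm. -/
lemma norm_le_vecNorm : ‖u‖ ≤ vecNorm u :=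
  (pi_norm_le_iff_of_nonneg (Real.sqrt_nonneg _)).2 fun i => Real.abs_le_sqrt
    (Finset.single_le_sum (f := fun i => u i ^ 2) (fun _ _ => sq_nonneg _) (Finset.mem_univ i))

end EuclideanNorm

section Cones

variable {n : ℕ}

lemma coneC1_subset_coneC2 : coneC1 n ⊆ coneC2 n := by
  intro H (hH : H.PosSemidef)
  have hsymm : H.IsSymm := by simpa [IsHermitian, IsSymm] using hH.isHermitian
  refine ⟨hsymm, fun i j => ⟨hH.diag_nonneg, ?_⟩⟩
  have hminor := (hH.submatrix ![i, j]).det_nonneg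
  simp only [det_fin_two, submatrix_apply, cons_val_zero, cons_val_one, hsymm.apply i j] at hminor
  linarith

lemma coneC2_subset_coneC3 : coneC2 n ⊆ coneC3 n := by
  refine fun H hH => ⟨hH.1, fun i j => ⟨(hH.2 i j).1, ?_⟩⟩
  have hii : 0 ≤ H i i := (hH.2 i j).1
  have hjj : 0 ≤ H j j := (hH.2 j i).1
  refine abs_le_of_sq_le_sq (a := 2 * |H i j|) ?_ (by positivity) |> (le_abs_self _).trans
  rw [mul_pow, sq_abs]
  linarith [(hH.2 i j).2, sq_nonneg (H i i - H j j)]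

lemma vecMulVec_self_mem_coneC1 (v : Fin n → ℝ) : vecMulVec v v ∈ coneC1 n := by
  simpa [coneC1] using posSemidef_vecMulVec_self_star v

lemma abs_apply_le_trace_of_mem_coneC3 {H : Matrix (Fin n) (Fin n) ℝ} (hH : H ∈ coneC3 n)
    (i j : Fin n) : |H i j| ≤ H.trace := by
  have hdiag (i : Fin n) : H i i ≤ H.trace :=
    Finset.single_le_sum (f := fun i => H i i) (fun j _ => (hH.2 j j).1) (Finset.mem_univ i)
  linarith [(hH.2 i j).2, hdiag i, hdiag j]

lemma trace_pos_of_abs_apply_le {ι : Type*} [Fintype ι] {H : Matrix ι ι ℝ} {γ : ℝ} (hγ : 0 ≤ γ)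
    (hH : ∀ i j, |H i j| ≤ γ * H.trace) (hne : H ≠ 0) : 0 < H.trace := by
  contrapose! hne
  ext i j
  simpa using (hH i j).trans (mul_nonpos_of_nonneg_of_nonpos hγ hne)

end Cones

section Pencil

variable {n m : ℕ} {F0 : Matrix (Fin m) (Fin m) ℝ} {K : Fin n → Matrix (Fin m) (Fin m) ℝ}
  {L : Fin n → Fin n → Matrix (Fin m) (Fin m) ℝ}

/-- The part `∑ᵢ ∑ⱼ Xᵢⱼ Lᵢⱼ` of the pencil that depends on `X`, as a linear map. -/
def bilinPart (L : Fin n → Fin n → Matrix (Fin m) (Fin m) ℝ) :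
    Matrix (Fin n) (Fin n) ℝ →ₗ[ℝ] Matrix (Fin m) (Fin m) ℝ :=
  ∑ i, ∑ j, (entryLinearMap ℝ ℝ i j).smulRight (L i j)

/-- The derivative `∑ₖ bₖ (Kₖ + δₖ(x))` of `x ↦ p(x, xxᵀ)` at `x` in the direction `b`,
when `Lᵢⱼ = Lⱼᵢ`. -/
def pencilDeriv (K : Fin n → Matrix (Fin m) (Fin m) ℝ)
    (L : Fin n → Fin n → Matrix (Fin m) (Fin m) ℝ) (x b : Fin n → ℝ) : Matrix (Fin m) (Fin m) ℝ :=
  ∑ k, b k • (K k + deltaMat L k x)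

lemma bilinPart_apply (X : Matrix (Fin n) (Fin n) ℝ) :
    bilinPart L X = ∑ i, ∑ j, X i j • L i j := by
  simp [bilinPart]

lemma pencil_eq (x : Fin n → ℝ) (X : Matrix (Fin n) (Fin n) ℝ) :
    pencil F0 K L x X = F0 + Fintype.linearCombination ℝ K x + bilinPart L X := by
  rw [pencil, bilinPart_apply, Fintype.linearCombination_apply]

lemma pencilDeriv_eq (x b : Fin n → ℝ) :
    pencilDeriv K L x b =
      Fintype.linearCombination ℝ K b + (2 : ℝ) • bilinPart L (vecMulVec b x) := by
  simp only [pencilDeriv, deltaMat, smul_add, Finset.sum_add_distrib, bilinPart_apply,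
    Fintype.linearCombination_apply, vecMulVec_apply, mul_smul, Finset.smul_sum, smul_comm (2 : ℝ)]

lemma bilinPart_transpose (hLsy : ∀ i j, L i j = L j i) (X : Matrix (Fin n) (Fin n) ℝ) :
    bilinPart L Xᵀ = bilinPart L X := by
  rw [bilinPart_apply, bilinPart_apply, Finset.sum_comm]
  simp only [transpose_apply, hLsy]

/-- The terms are grouped so that the matrix of the MFCQ condition appears with weight `s`. -/
lemma pencil_add_smul (hLsy : ∀ i j, L i j = L j i) (x b : Fin n → ℝ) (s : ℝ) :
    pencil F0 K L (x + s • b) (vecMulVec (x + s • b) (x + s • b)) =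
      (1 - s) • pencil F0 K L x (vecMulVec x x)
        + s • (pencil F0 K L x (vecMulVec x x) + pencilDeriv K L x b)
        + s ^ 2 • bilinPart L (vecMulVec b b) := by
  have hcross : bilinPart L (vecMulVec x b) = bilinPart L (vecMulVec b x) := by
    rw [← bilinPart_transpose hLsy, transpose_vecMulVec]
  simp only [pencil_eq, pencilDeriv_eq, map_add, map_smul, add_vecMulVec, vecMulVec_add,
    smul_vecMulVec, vecMulVec_smul, hcross]
  module

lemma pencil_convex_combination (x y : Fin n → ℝ) (X Y : Matrix (Fin n) (Fin n) ℝ) {a b : ℝ}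
    (hab : a + b = 1) :
    pencil F0 K L (a • x + b • y) (a • X + b • Y) =
      a • pencil F0 K L x X + b • pencil F0 K L y Y := by
  obtain rfl := eq_sub_of_add_eq hab
  simp only [pencil_eq, map_add, map_smul]
  module

lemma continuous_pencil_self : Continuous fun x => pencil F0 K L x (vecMulVec x x) := by
  simp only [pencil, vecMulVec_apply]
  fun_prop

lemma continuous_pencilDeriv (b : Fin n → ℝ) : Continuous fun x => pencilDeriv K L x b := by
  simp only [pencilDeriv, deltaMat]
  fun_prop

lemma isClosed_feasSet : IsClosed (feasSet F0 K L) :=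
  isClosed_setOf_posSemidef.preimage continuous_pencil_self.neg

lemma isHermitian_bilinPart (hL : ∀ i j, (L i j).IsSymm) (X : Matrix (Fin n) (Fin n) ℝ) :
    (bilinPart L X).IsHermitian := by
  simp only [IsSymm] at hL
  simp [IsHermitian, bilinPart_apply, transpose_sum, hL]

lemma isHermitian_pencil (hF0 : F0.IsSymm) (hK : ∀ k, (K k).IsSymm)
    (hL : ∀ i j, (L i j).IsSymm) (x : Fin n → ℝ) (X : Matrix (Fin n) (Fin n) ℝ) :
    (pencil F0 K L x X).IsHermitian := by
  simp only [IsSymm] at hF0 hK hL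
  simp [IsHermitian, pencil, transpose_sum, hF0, hK, hL]

lemma isHermitian_pencilDeriv (hK : ∀ k, (K k).IsSymm) (hL : ∀ i j, (L i j).IsSymm)
    (x b : Fin n → ℝ) : (pencilDeriv K L x b).IsHermitian := by
  simp only [IsSymm] at hK hL
  simp [IsHermitian, pencilDeriv, deltaMat, transpose_sum, hK, hL]

open scoped MatrixOrder Matrix.Norms.L2Operator

lemma norm_bilinPart_le {X : Matrix (Fin n) (Fin n) ℝ} {r : ℝ} (hX : ∀ i j, |X i j| ≤ r) :
    ‖bilinPart L X‖ ≤ r * ∑ i, ∑ j, ‖L i j‖ := by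
  simp only [bilinPart_apply, Finset.mul_sum]
  refine norm_sum_le_of_le _ fun i _ => norm_sum_le_of_le _ fun j _ => ?_
  rw [norm_smul]
  exact mul_le_mul_of_nonneg_right (hX i j) (norm_nonneg _)

lemma pencil_self_le_smul_one (hL : ∀ i j, (L i j).IsSymm) {x : Fin n → ℝ}
    {X : Matrix (Fin n) (Fin n) ℝ} (hX : pencil F0 K L x X ≤ 0) {r : ℝ}
    (hgap : ∀ i j, |(X - vecMulVec x x) i j| ≤ r) :
    pencil F0 K L x (vecMulVec x x) ≤ (r * ∑ i, ∑ j, ‖L i j‖) • (1 : Matrix _ _ ℝ) := by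
  have hgap' (i j) : |(vecMulVec x x - X) i j| ≤ r := by
    simpa only [Matrix.sub_apply, abs_sub_comm] using hgap i j
  calc pencil F0 K L x (vecMulVec x x)
      = pencil F0 K L x X + bilinPart L (vecMulVec x x - X) := by
        simp only [pencil_eq, map_sub]
        abel
    _ ≤ bilinPart L (vecMulVec x x - X) := add_le_of_nonpos_left hX
    _ ≤ ‖bilinPart L (vecMulVec x x - X)‖ • 1 := le_norm_smul_one (isHermitian_bilinPart hL _)
    _ ≤ (r * ∑ i, ∑ j, ‖L i j‖) • 1 :=
        smul_le_smul_of_nonneg_right (norm_bilinPart_le hgap') PosSemidef.one.nonneg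

lemma add_smul_mem_feasSet (hL : ∀ i j, (L i j).IsSymm) (hLsy : ∀ i j, L i j = L j i)
    {x b : Fin n → ℝ} {X : Matrix (Fin n) (Fin n) ℝ} {s κ : ℝ} (hs₀ : 0 ≤ s) (hs₁ : s ≤ 1)
    (hX : NegSemidef' (pencil F0 K L x X)) (hgap : ∀ i j, |(X - vecMulVec x x) i j| ≤ s * κ)
    (hmargin : ((1 - s) * (κ * ∑ i, ∑ j, ‖L i j‖)) • (1 : Matrix _ _ ℝ)
      + (pencil F0 K L x (vecMulVec x x) + pencilDeriv K L x b)
      + s • bilinPart L (vecMulVec b b) ≤ 0) :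
    x + s • b ∈ feasSet F0 K L := by
  have hx := pencil_self_le_smul_one hL (negSemidef_iff_nonpos.1 hX) hgap
  refine negSemidef_iff_nonpos.2 ?_
  calc pencil F0 K L (x + s • b) (vecMulVec (x + s • b) (x + s • b))
      = (1 - s) • pencil F0 K L x (vecMulVec x x)
        + s • (pencil F0 K L x (vecMulVec x x) + pencilDeriv K L x b)
        + s ^ 2 • bilinPart L (vecMulVec b b) := pencil_add_smul hLsy x b s
    _ ≤ (1 - s) • (s * κ * ∑ i, ∑ j, ‖L i j‖) • (1 : Matrix _ _ ℝ)
        + s • (pencil F0 K L x (vecMulVec x x) + pencilDeriv K L x b)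
        + s ^ 2 • bilinPart L (vecMulVec b b) := by
      have := smul_le_smul_of_nonneg_left hx (sub_nonneg.2 hs₁)
      gcongr
    _ = s • (((1 - s) * (κ * ∑ i, ∑ j, ‖L i j‖)) • (1 : Matrix _ _ ℝ)
        + (pencil F0 K L x (vecMulVec x x) + pencilDeriv K L x b)
        + s • bilinPart L (vecMulVec b b)) := by module
    _ ≤ 0 := smul_nonpos_of_nonneg_of_nonpos hs₀ hmargin

lemma MFCQ.exists_eventually_add_smul_mem_feasSet (hF0 : F0.IsSymm) (hK : ∀ k, (K k).IsSymm)
    (hL : ∀ i j, (L i j).IsSymm) (hLsy : ∀ i j, L i j = L j i) {xc : Fin n → ℝ}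
    (h : MFCQ F0 K L xc) (γ : ℝ) :
    ∃ b : Fin n → ℝ, ∀ᶠ z : (Fin n → ℝ) × ℝ in 𝓝 (xc, 0), 0 ≤ z.2 →
      ∀ X, NegSemidef' (pencil F0 K L z.1 X) →
        (∀ i j, |(X - vecMulVec z.1 z.1) i j| ≤ γ * z.2) → z.1 + z.2 • b ∈ feasSet F0 K L := by
  obtain ⟨b, hb : (-(_ + pencilDeriv K L xc b)).PosDef⟩ := h
  set N : ℝ := ∑ i, ∑ j, ‖L i j‖
  -- A step of length `t / σ` has to absorb the violation `γ t N`, that is `σ γ N` per unit step.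
  obtain ⟨σ, hσ, hσb⟩ := exists_pos_posDef_sub_mul_smul_one hb (γ * N)
  let Φ (z : (Fin n → ℝ) × ℝ) : Matrix (Fin m) (Fin m) ℝ :=
    ((1 - z.2 / σ) * (γ * σ * N)) • 1
      + (pencil F0 K L z.1 (vecMulVec z.1 z.1) + pencilDeriv K L z.1 b)
      + (z.2 / σ) • bilinPart L (vecMulVec b b)
  have hΦcont : Continuous Φ := by
    have hpencil : Continuous fun z : (Fin n → ℝ) × ℝ => pencil F0 K L z.1 (vecMulVec z.1 z.1) :=
      continuous_pencil_self.comp continuous_fst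
    have hderiv : Continuous fun z : (Fin n → ℝ) × ℝ => pencilDeriv K L z.1 b :=
      (continuous_pencilDeriv b).comp continuous_fst
    fun_prop
  have hΦsymm (z) : (-Φ z).IsHermitian :=
    (((isHermitian_one.smul (.all _)).add ((isHermitian_pencil hF0 hK hL _ _).add
      (isHermitian_pencilDeriv hK hL _ _))).add ((isHermitian_bilinPart hL _).smul (.all _))).neg
  have hΦ : (-Φ (xc, 0)).PosDef := by
    convert hσb using 1
    simp only [Φ, zero_div, sub_zero, zero_smul, one_mul]
    module
  have hsmall : ∀ᶠ z : (Fin n → ℝ) × ℝ in 𝓝 (xc, 0), z.2 < σ :=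
    continuous_snd.continuousAt.eventually_lt_const hσ
  refine ⟨σ⁻¹ • b, ?_⟩
  filter_upwards [hΦcont.neg.continuousAt.eventually (eventually_nhds_posDef hΦ), hsmall]
    with ⟨x, t⟩ hpos htσ ht X hX hgap
  rw [smul_smul, ← div_eq_mul_inv]
  refine add_smul_mem_feasSet hL hLsy (κ := γ * σ) (by positivity) ((div_le_one hσ).2 htσ.le) hX
    (fun i j => (hgap i j).trans_eq (by field_simp)) ?_
  exact neg_nonneg.1 (hpos (hΦsymm _)).posSemidef.nonneg

end Pencil

section Penalty

variable {n : ℕ} {c xc : Fin n → ℝ} {η : ℝ}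

lemma penObj_self : penObj c xc η xc = c ⬝ᵥ xc := by
  simp [penObj, vecNorm_sq]

lemma relObj_eq (x : Fin n → ℝ) (X : Matrix (Fin n) (Fin n) ℝ) :
    relObj c xc η x X = penObj c xc η x + η * (X - vecMulVec x x).trace := by
  rw [relObj, penObj, vecNorm_sq, trace_sub, trace_vecMulVec, sub_dotProduct, dotProduct_sub,
    dotProduct_sub, dotProduct_comm x xc]
  ring

lemma relObj_vecMulVec_self (x : Fin n → ℝ) :
    relObj c xc η x (vecMulVec x x) = penObj c xc η x := by
  rw [relObj_eq, sub_self, trace_zero, mul_zero, add_zero]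

lemma relObj_convex_combination (x y : Fin n → ℝ) (X Y : Matrix (Fin n) (Fin n) ℝ) {a b : ℝ}
    (hab : a + b = 1) :
    relObj c xc η (a • x + b • y) (a • X + b • Y) =
      a * relObj c xc η x X + b * relObj c xc η y Y := by
  obtain rfl := eq_sub_of_add_eq hab
  simp only [relObj, dotProduct_add, dotProduct_smul, trace_add, trace_smul, smul_eq_mul]
  ring

lemma penObj_add_smul (x b : Fin n → ℝ) (t : ℝ) :
    penObj c xc η (x + t • b) =
      penObj c xc η x + t * (c ⬝ᵥ b + η * (2 * (b ⬝ᵥ (x - xc)) + t * (b ⬝ᵥ b))) := by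
  rw [penObj, penObj, vecNorm_sq, vecNorm_sq, add_sub_right_comm]
  simp only [dotProduct_add, add_dotProduct, dotProduct_smul, smul_dotProduct, smul_eq_mul,
    dotProduct_comm (x - xc) b]
  ring

lemma vecNorm_sub_le_of_penObj_add_le {x : Fin n → ℝ} {t : ℝ} (hη : 0 < η) (ht : 0 ≤ t)
    (h : penObj c xc η x + η * t ≤ c ⬝ᵥ xc) :
    vecNorm (x - xc) ≤ vecNorm c / η ∧ t ≤ (vecNorm c / η) ^ 2 := by
  set r := vecNorm (x - xc) with hr
  have hr₀ : 0 ≤ r := Real.sqrt_nonneg _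
  have hcauchy : c ⬝ᵥ xc - c ⬝ᵥ x ≤ vecNorm c * r := by
    rw [← neg_sub, ← dotProduct_sub]
    exact (neg_le_abs _).trans (abs_dotProduct_le_vecNorm_mul _ _)
  have hsum : r ^ 2 + t ≤ vecNorm c / η * r := by
    rw [div_mul_eq_mul_div, le_div_iff₀ hη]
    rw [penObj] at h
    linarith
  have hrc : r ≤ vecNorm c / η := by
    by_contra! hlt
    nlinarith [show 0 ≤ vecNorm c / η from div_nonneg (Real.sqrt_nonneg _) hη.le]
  exact ⟨hrc, by nlinarith⟩

lemma eventually_forall_of_penObj_add_le {p : (Fin n → ℝ) × ℝ → Prop}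
    (hp : ∀ᶠ z in 𝓝 (xc, 0), p z) :
    ∀ᶠ η in atTop, ∀ x t, 0 ≤ t → penObj c xc η x + η * t ≤ c ⬝ᵥ xc → p (x, t) := by
  obtain ⟨ε, hε, hball⟩ := Metric.eventually_nhds_iff.1 hp
  have hlim : Tendsto (fun η => vecNorm c / η) atTop (𝓝 0) := tendsto_id.const_div_atTop _
  have hlim₂ : Tendsto (fun η => (vecNorm c / η) ^ 2) atTop (𝓝 0) := by simpa using hlim.pow 2
  filter_upwards [eventually_gt_atTop 0, hlim.eventually_lt_const hε, hlim₂.eventually_lt_const hε]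
    with η hη hr hr₂ x t ht hle
  obtain ⟨hx, ht'⟩ := vecNorm_sub_le_of_penObj_add_le hη ht hle
  refine hball ?_
  rw [Prod.dist_eq, dist_eq_norm, Real.dist_0_eq_abs, abs_of_nonneg ht]
  exact max_lt ((norm_le_vecNorm _).trans_lt (hx.trans_lt hr)) (ht'.trans_lt hr₂)

/-- Moving by `t • b` changes the quadratic penalty by `η t (2 bᵀ(x - x̌) + t bᵀb)`, and the bracket
is small near `(x̌, 0)`; the change `t cᵀb` of the linear term does not grow with `η`. -/
lemma eventually_penObj_add_smul_lt (b : Fin n → ℝ) :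
    ∀ᶠ η in atTop, ∀ x t, 0 < t → penObj c xc η x + η * t ≤ c ⬝ᵥ xc →
      penObj c xc η (x + t • b) < penObj c xc η x + η * t := by
  have hsmall : ∀ᶠ z : (Fin n → ℝ) × ℝ in 𝓝 (xc, 0),
      2 * (b ⬝ᵥ (z.1 - xc)) + z.2 * (b ⬝ᵥ b) < 1 / 2 := by
    refine Tendsto.eventually_lt_const (v := 0) (by norm_num) (Continuous.tendsto' ?_ _ _ ?_)
    · fun_prop
    · simp
  filter_upwards [eventually_forall_of_penObj_add_le hsmall, eventually_gt_atTop 0,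
    eventually_gt_atTop (2 * (c ⬝ᵥ b))] with η hnear hη hηb x t ht hle
  rw [penObj_add_smul, mul_comm η t]
  gcongr
  linarith [mul_lt_mul_of_pos_left (hnear x t ht.le hle) hη]

end Penalty

section Relaxation

variable {n m : ℕ} {F0 : Matrix (Fin m) (Fin m) ℝ} {K : Fin n → Matrix (Fin m) (Fin m) ℝ}
  {L : Fin n → Fin n → Matrix (Fin m) (Fin m) ℝ} {C : Set (Matrix (Fin n) (Fin n) ℝ)}
  {c xc x y : Fin n → ℝ} {X Y : Matrix (Fin n) (Fin n) ℝ} {η : ℝ}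

lemma exists_isOptPen (c : Fin n → ℝ) (hη : 0 < η) (hfeas : xc ∈ feasSet F0 K L) :
    ∃ x, IsOptPen F0 K L c xc η x := by
  have hcont : Continuous (penObj c xc η) := by
    unfold penObj vecNorm
    fun_prop
  have hfar : ∀ᶠ x in cocompact (Fin n → ℝ), penObj c xc η xc ≤ penObj c xc η x := by
    filter_upwards [(isCompact_closedBall xc (vecNorm c / η)).compl_mem_cocompact] with x hx
    contrapose! hx
    have hle : penObj c xc η x + η * 0 ≤ c ⬝ᵥ xc := by simpa [← penObj_self (η := η)] using hx.le
    rw [Set.notMem_compl_iff, mem_closedBall_iff_norm]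
    exact (norm_le_vecNorm _).trans (vecNorm_sub_le_of_penObj_add_le hη le_rfl hle).1
  obtain ⟨x, hx, hmin⟩ := hcont.continuousOn.exists_isMinOn' isClosed_feasSet hfeas
    (hfar.filter_mono inf_le_left)
  exact ⟨x, hx, isMinOn_iff.1 hmin⟩

lemma IsOptPen.dotProduct_le (h : IsOptPen F0 K L c xc η x) (hη : 0 ≤ η)
    (hfeas : xc ∈ feasSet F0 K L) : c ⬝ᵥ x ≤ c ⬝ᵥ xc := by
  have hle := h.2 xc hfeas
  rw [penObj_self, penObj] at hle
  nlinarith [mul_nonneg hη (sq_nonneg (vecNorm (x - xc)))]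

/-- Exactness of the penalty in `(R_{η,C})`: every feasible point of the relaxation with
`X ≠ xxᵀ` is strictly beaten by a feasible point of the original problem. -/
def PenaltyExact (F0 : Matrix (Fin m) (Fin m) ℝ) (K : Fin n → Matrix (Fin m) (Fin m) ℝ)
    (L : Fin n → Fin n → Matrix (Fin m) (Fin m) ℝ) (c xc : Fin n → ℝ) (η : ℝ)
    (C : Set (Matrix (Fin n) (Fin n) ℝ)) : Prop :=
  ∀ x X, RelFeasible F0 K L C x X → X ≠ vecMulVec x x →
    ∃ y ∈ feasSet F0 K L, penObj c xc η y < relObj c xc η x X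

lemma MFCQ.eventually_penaltyExact (hF0 : F0.IsSymm) (hK : ∀ k, (K k).IsSymm)
    (hL : ∀ i j, (L i j).IsSymm) (hLsy : ∀ i j, L i j = L j i) (c : Fin n → ℝ)
    (hfeas : xc ∈ feasSet F0 K L) (hmfcq : MFCQ F0 K L xc) {γ : ℝ} (hγ : 0 ≤ γ)
    (htrace : ∀ H ∈ C, ∀ i j, |H i j| ≤ γ * H.trace) :
    ∀ᶠ η in atTop, PenaltyExact F0 K L c xc η C := by
  obtain ⟨b, hb⟩ := hmfcq.exists_eventually_add_smul_mem_feasSet hF0 hK hL hLsy γ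
  filter_upwards [eventually_forall_of_penObj_add_le (c := c) hb,
    eventually_penObj_add_smul_lt (c := c) (xc := xc) b] with η hrestore hsave x X ⟨_, hX, hC⟩ hne
  obtain hlt | hle := lt_or_ge (c ⬝ᵥ xc) (relObj c xc η x X)
  · exact ⟨xc, hfeas, penObj_self.trans_lt hlt⟩
  have hgap := htrace _ hC
  have ht : 0 < (X - vecMulVec x x).trace :=
    trace_pos_of_abs_apply_le hγ hgap (sub_ne_zero.2 hne)
  rw [relObj_eq] at hle ⊢
  exact ⟨_, hrestore x _ ht.le hle ht.le X hX hgap, hsave x _ ht hle⟩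

lemma relFeasible_vecMulVec_self (hrank : ∀ v, vecMulVec v v ∈ C) (hx : x ∈ feasSet F0 K L) :
    RelFeasible F0 K L C x (vecMulVec x x) := by
  refine ⟨transpose_vecMulVec x x, hx, ?_⟩
  simpa using hrank 0

lemma PenaltyExact.isOptRel (hexact : PenaltyExact F0 K L c xc η C)
    (hrank : ∀ v, vecMulVec v v ∈ C) (h : IsOptPen F0 K L c xc η x) :
    IsOptRel F0 K L c xc η C x (vecMulVec x x) := by
  refine ⟨relFeasible_vecMulVec_self hrank h.1, fun y Y hY => ?_⟩
  rw [relObj_vecMulVec_self]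
  obtain rfl | hne := eq_or_ne Y (vecMulVec y y)
  · exact (h.2 y hY.2.1).trans_eq (relObj_vecMulVec_self y).symm
  · obtain ⟨z, hz, hlt⟩ := hexact y Y hY hne
    exact (h.2 z hz).trans hlt.le

lemma PenaltyExact.eq_vecMulVec (hexact : PenaltyExact F0 K L c xc η C)
    (hrank : ∀ v, vecMulVec v v ∈ C) (h : IsOptRel F0 K L c xc η C x X) :
    X = vecMulVec x x := by
  by_contra hne
  obtain ⟨y, hy, hlt⟩ := hexact x X h.1 hne
  have hle := h.2 y _ (relFeasible_vecMulVec_self hrank hy)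
  rw [relObj_vecMulVec_self] at hle
  exact hlt.not_ge hle

lemma midpoint_sub_vecMulVec (x y : Fin n → ℝ) :
    (1 / 2 : ℝ) • vecMulVec x x + (1 / 2 : ℝ) • vecMulVec y y
        - vecMulVec ((1 / 2 : ℝ) • x + (1 / 2 : ℝ) • y) ((1 / 2 : ℝ) • x + (1 / 2 : ℝ) • y) =
      vecMulVec ((1 / 2 : ℝ) • (x - y)) ((1 / 2 : ℝ) • (x - y)) := by
  ext i j
  simp only [Matrix.sub_apply, Matrix.add_apply, Matrix.smul_apply, vecMulVec_apply, Pi.add_apply,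
    Pi.sub_apply, Pi.smul_apply, smul_eq_mul]
  ring

lemma relFeasible_midpoint (hrank : ∀ v, vecMulVec v v ∈ C) (hx : x ∈ feasSet F0 K L)
    (hy : y ∈ feasSet F0 K L) :
    RelFeasible F0 K L C ((1 / 2 : ℝ) • x + (1 / 2 : ℝ) • y)
      ((1 / 2 : ℝ) • vecMulVec x x + (1 / 2 : ℝ) • vecMulVec y y) := by
  refine ⟨?_, ?_, midpoint_sub_vecMulVec x y ▸ hrank _⟩
  · simp [IsSymm, transpose_vecMulVec]
  · have hhalf : (0 : ℝ) ≤ 1 / 2 := by norm_num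
    have hpos := (PosSemidef.smul hx hhalf).add (PosSemidef.smul hy hhalf)
    rwa [smul_neg, smul_neg, ← neg_add,
      ← pencil_convex_combination x y _ _ (add_halves (1 : ℝ))] at hpos

lemma IsOptRel.midpoint (hrank : ∀ v, vecMulVec v v ∈ C)
    (hx : IsOptRel F0 K L c xc η C x (vecMulVec x x))
    (hy : IsOptRel F0 K L c xc η C y (vecMulVec y y)) :
    IsOptRel F0 K L c xc η C ((1 / 2 : ℝ) • x + (1 / 2 : ℝ) • y)
      ((1 / 2 : ℝ) • vecMulVec x x + (1 / 2 : ℝ) • vecMulVec y y) := by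
  refine ⟨relFeasible_midpoint hrank hx.1.2.1 hy.1.2.1, fun z Z hZ => ?_⟩
  rw [relObj_convex_combination x y _ _ (add_halves (1 : ℝ))]
  linarith [hx.2 z Z hZ, hy.2 z Z hZ]

lemma PenaltyExact.eq_of_isOptRel (hexact : PenaltyExact F0 K L c xc η C)
    (hrank : ∀ v, vecMulVec v v ∈ C) (hx : IsOptRel F0 K L c xc η C x X)
    (hy : IsOptRel F0 K L c xc η C y Y) : x = y := by
  obtain rfl := hexact.eq_vecMulVec hrank hx
  obtain rfl := hexact.eq_vecMulVec hrank hy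
  have hgap := sub_eq_zero.2 (hexact.eq_vecMulVec hrank (hx.midpoint hrank hy))
  rw [midpoint_sub_vecMulVec, vecMulVec_eq_zero, or_self] at hgap
  simpa [sub_eq_zero] using hgap

end Relaxation

theorem bmi_theorem_one_general {n m : ℕ}
    (F0 : Matrix (Fin m) (Fin m) ℝ)
    (K : Fin n → Matrix (Fin m) (Fin m) ℝ)
    (L : Fin n → Fin n → Matrix (Fin m) (Fin m) ℝ)
    (hF0 : F0.IsSymm) (hK : ∀ k, (K k).IsSymm)
    (hL : ∀ i j, (L i j).IsSymm) (hLsy : ∀ i j, L i j = L j i)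
    (c xc : Fin n → ℝ)
    (hfeas : xc ∈ feasSet F0 K L)
    (hmfcq : MFCQ F0 K L xc)
    (C : Set (Matrix (Fin n) (Fin n) ℝ)) {γ : ℝ} (hγ : 0 ≤ γ)
    (hrank : ∀ v, vecMulVec v v ∈ C) (htrace : ∀ H ∈ C, ∀ i j, |H i j| ≤ γ * H.trace) :
    ∃ η₀ > (0 : ℝ), ∀ η ≥ η₀,
      ∃ (xs : Fin n → ℝ) (Xs : Matrix (Fin n) (Fin n) ℝ),
        IsOptRel F0 K L c xc η C xs Xs ∧
        (∀ y Y, IsOptRel F0 K L c xc η C y Y → y = xs ∧ Y = Xs) ∧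
        Xs = vecMulVec xs xs ∧ c ⬝ᵥ xs ≤ c ⬝ᵥ xc := by
  obtain ⟨η₀, hη₀⟩ := eventually_atTop.1
    ((hmfcq.eventually_penaltyExact hF0 hK hL hLsy c hfeas hγ htrace).and (eventually_gt_atTop 0))
  refine ⟨η₀, (hη₀ η₀ le_rfl).2, fun η hη => ?_⟩
  obtain ⟨hexact, hηpos⟩ := hη₀ η hη
  obtain ⟨x, hx⟩ := exists_isOptPen c hηpos hfeas
  have hxrel := hexact.isOptRel hrank hx
  refine ⟨x, vecMulVec x x, hxrel, fun y Y hY => ?_, rfl, hx.dotProduct_le hηpos.le hfeas⟩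
  obtain rfl := hexact.eq_of_isOptRel hrank hY hxrel
  exact ⟨rfl, hexact.eq_vecMulVec hrank hY⟩

theorem bmi_theorem_one {n m : ℕ} (hn : 0 < n) (hm : 0 < m)
    (F0 : Matrix (Fin m) (Fin m) ℝ)
    (K : Fin n → Matrix (Fin m) (Fin m) ℝ)
    (L : Fin n → Fin n → Matrix (Fin m) (Fin m) ℝ)
    (hF0 : F0.IsSymm) (hK : ∀ k, (K k).IsSymm)
    (hL : ∀ i j, (L i j).IsSymm) (hLsy : ∀ i j, L i j = L j i)
    (c xc : Fin n → ℝ)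
    (hne : (feasSet F0 K L).Nonempty)
    (hfeas : xc ∈ feasSet F0 K L)
    (hmfcq : MFCQ F0 K L xc)
    (C : Set (Matrix (Fin n) (Fin n) ℝ))
    (hC : C = coneC1 n ∨ C = coneC2 n ∨ C = coneC3 n) :
    ∃ η₀ > (0 : ℝ), ∀ η ≥ η₀,
      ∃ (xs : Fin n → ℝ) (Xs : Matrix (Fin n) (Fin n) ℝ),
        IsOptRel F0 K L c xc η C xs Xs ∧
        (∀ y Y, IsOptRel F0 K L c xc η C y Y → y = xs ∧ Y = Xs) ∧
        Xs = vecMulVec xs xs ∧ c ⬝ᵥ xs ≤ c ⬝ᵥ xc := by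
  have hcone : coneC1 n ⊆ C ∧ C ⊆ coneC3 n := by
    rcases hC with rfl | rfl | rfl
    · exact ⟨subset_rfl, coneC1_subset_coneC2.trans coneC2_subset_coneC3⟩
    · exact ⟨coneC1_subset_coneC2, coneC2_subset_coneC3⟩
    · exact ⟨coneC1_subset_coneC2.trans coneC2_subset_coneC3, subset_rfl⟩
  exact bmi_theorem_one_general F0 K L hF0 hK hL hLsy c xc hfeas hmfcq C zero_le_one
    (fun v => hcone.1 (vecMulVec_self_mem_coneC1 v))
    fun H hH i j => (abs_apply_le_trace_of_mem_coneC3 (hcone.2 hH) i j).trans_eq (one_mul _).symm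
end
end

section
/- Lemma 3: Suppose the BMI feasible set F is nonempty and x̌ ∈ ℝⁿ satisfies s(x̌) > 2‖p‖₂ d_F(x̌). Then for every ε > 0 there exists η₀ > 0 such that for all η ≥ η₀, every optimal solution x* of the penalized problem (P_η) satisfies s(x̌) − s(x*) ≤ 2‖p‖₂ d_F(x̌) + ε, and moreover x* satisfies the MFCQ condition. -/
/-!
The function `s` is Lipschitz with constant `2‖p‖₂`: for unit vectors `b` and `u`, the Rayleigh
quotients at `u` of `-∑ₖ bₖ (Kₖ + δₖ(x))` and `-∑ₖ bₖ (Kₖ + δₖ(y))` differ by `2 bᵀ M(u) (y - x)`,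
a bound which survives the infimum over `u` and the supremum over `b`.

A minimizer `x*` of `(P_η)` satisfies `‖x* - x̌‖ ≤ d_F(x̌) + ‖c‖ / η`: compared with a feasible
point at distance `r` from `x̌`, a minimizer at distance `t` has `η (t² - r²) ≤ ‖c‖ (t + r)`. Hence
`s(x̌) - s(x*) ≤ 2‖p‖₂ (d_F(x̌) + ‖c‖ / η)`, where `‖c‖ / η` vanishes as `η → ∞`. The gap hypothesis
then yields `s(x*) > 0`, so some `∑ₖ bₖ (Kₖ + δₖ(x*))` is negative definite, and adding the negative
semidefinite `p(x*, x*x*ᵀ)` keeps it so.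
-/

open Matrix

noncomputable section

lemma dist_le_infDist_add_of_isMinOn {X : Type*} [PseudoMetricSpace X] {s : Set X} {f : X → ℝ}
    {C : NNReal} {η : ℝ} {x x₀ : X} (hf : LipschitzOnWith C f s) (hη : 0 < η) (hx : x ∈ s)
    (hmin : IsMinOn (fun y ↦ f y + η * dist y x₀ ^ 2) s x) :
    dist x x₀ ≤ Metric.infDist x₀ s + C / η := by
  rw [← sub_le_iff_le_add, Metric.le_infDist ⟨x, hx⟩]
  intro a ha
  by_contra! hfar
  rw [dist_comm, lt_sub_iff_add_lt, ← lt_sub_iff_add_lt', div_lt_iff₀' hη] at hfar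
  have hobj : f x + η * dist x x₀ ^ 2 ≤ f a + η * dist a x₀ ^ 2 := isMinOn_iff.1 hmin a ha
  have hpos : 0 < dist x x₀ + dist a x₀ := by
    have := pos_of_mul_pos_right (C.coe_nonneg.trans_lt hfar) hη.le
    linarith [dist_nonneg (x := a) (y := x₀)]
  have hlip : f a - f x ≤ C * (dist x x₀ + dist a x₀) :=
    calc f a - f x ≤ dist (f a) (f x) := le_abs_self _
      _ ≤ C * dist a x := hf.dist_le_mul a ha x hx
      _ ≤ C * (dist x x₀ + dist a x₀) := by
        gcongr
        exact add_comm (dist x x₀) _ ▸ dist_triangle_right a x x₀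
  linarith [mul_lt_mul_of_pos_right hfar hpos]

section EuclideanNorm

variable {k : ℕ}

lemma vecNorm_eq_norm (u : Fin k → ℝ) : vecNorm u = ‖WithLp.toLp 2 u‖ := by
  simp [vecNorm, EuclideanSpace.norm_eq]

lemma vecNorm_sub_eq_dist (u v : Fin k → ℝ) :
    vecNorm (u - v) = dist (WithLp.toLp 2 u) (WithLp.toLp 2 v) := by
  rw [vecNorm_eq_norm, WithLp.toLp_sub, dist_eq_norm]

lemma vecNorm_nonneg (u : Fin k → ℝ) : 0 ≤ vecNorm u := Real.sqrt_nonneg _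

lemma vecNorm_smul (t : ℝ) (u : Fin k → ℝ) : vecNorm (t • u) = |t| * vecNorm u := by
  rw [vecNorm_eq_norm, WithLp.toLp_smul, norm_smul, Real.norm_eq_abs, vecNorm_eq_norm]

lemma vecNorm_pos_iff {u : Fin k → ℝ} : 0 < vecNorm u ↔ u ≠ 0 := by
  rw [vecNorm_eq_norm, norm_pos_iff, ne_eq, WithLp.toLp_eq_zero]

lemma dotProduct_le_vecNorm_mul_vecNorm (u v : Fin k → ℝ) : u ⬝ᵥ v ≤ vecNorm u * vecNorm v :=
  Real.sum_mul_le_sqrt_mul_sqrt _ _ _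

lemma lipschitzWith_dotProduct (c : Fin k → ℝ) :
    LipschitzWith ‖WithLp.toLp 2 c‖₊ fun y : EuclideanSpace ℝ (Fin k) ↦ c ⬝ᵥ y.ofLp := by
  refine LipschitzWith.of_dist_le_mul fun x y ↦ ?_
  rw [Real.dist_eq, ← dotProduct_sub, dist_eq_norm, coe_nnnorm]
  simpa [EuclideanSpace.inner_eq_star_dotProduct, dotProduct_comm] using
    abs_real_inner_le_norm (WithLp.toLp 2 c) (x - y)

lemma exists_vecNorm_eq_one (hk : 0 < k) : ∃ u : Fin k → ℝ, vecNorm u = 1 :=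
  ⟨Pi.single ⟨0, hk⟩ 1, by simp [vecNorm, Pi.single_apply]⟩

lemma isCompact_vecNorm_sphere (k : ℕ) : IsCompact {u : Fin k → ℝ | vecNorm u = 1} := by
  convert (isCompact_sphere (0 : EuclideanSpace ℝ (Fin k)) 1).image
    (PiLp.continuous_ofLp 2 _) using 1
  ext u
  refine ⟨fun hu ↦ ⟨WithLp.toLp 2 u, ?_, rfl⟩, ?_⟩
  · rwa [mem_sphere_zero_iff_norm, ← vecNorm_eq_norm]
  · rintro ⟨v, hv, rfl⟩
    rwa [Set.mem_ofPred_eq, vecNorm_eq_norm, ← mem_sphere_zero_iff_norm]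

lemma bddAbove_vecNorm_sphere {f : (Fin k → ℝ) → ℝ} (hf : Continuous f) :
    BddAbove {r | ∃ u : Fin k → ℝ, vecNorm u = 1 ∧ r = f u} := by
  obtain ⟨B, hB⟩ := (isCompact_vecNorm_sphere k).bddAbove_image hf.continuousOn
  exact ⟨B, fun r ⟨u, hu, hr⟩ ↦ hr ▸ hB ⟨u, hu, rfl⟩⟩

lemma bddBelow_vecNorm_sphere {f : (Fin k → ℝ) → ℝ} (hf : Continuous f) :
    BddBelow {r | ∃ u : Fin k → ℝ, vecNorm u = 1 ∧ r = f u} := by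
  obtain ⟨B, hB⟩ := (isCompact_vecNorm_sphere k).bddBelow_image hf.continuousOn
  exact ⟨B, fun r ⟨u, hu, hr⟩ ↦ hr ▸ hB ⟨u, hu, rfl⟩⟩

end EuclideanNorm

section SmallestEigenvalue

variable {k : ℕ}

lemma lambdaMin_le (A : Matrix (Fin k) (Fin k) ℝ) {u : Fin k → ℝ} (hu : vecNorm u = 1) :
    lambdaMin A ≤ u ⬝ᵥ (A *ᵥ u) :=
  csInf_le (bddBelow_vecNorm_sphere (f := fun u ↦ u ⬝ᵥ (A *ᵥ u)) (by fun_prop)) ⟨u, hu, rfl⟩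

lemma lambdaMin_mul_sq_le (A : Matrix (Fin k) (Fin k) ℝ) (u : Fin k → ℝ) :
    lambdaMin A * vecNorm u ^ 2 ≤ u ⬝ᵥ (A *ᵥ u) := by
  rcases eq_or_ne u 0 with rfl | hu
  · simp [vecNorm]
  have hpos : 0 < vecNorm u := vecNorm_pos_iff.2 hu
  have hunit : vecNorm ((vecNorm u)⁻¹ • u) = 1 := by
    rw [vecNorm_smul, abs_of_pos (inv_pos.2 hpos), inv_mul_cancel₀ hpos.ne']
  have hle := lambdaMin_le A hunit
  rw [mulVec_smul, dotProduct_smul, smul_dotProduct, smul_smul, smul_eq_mul, ← mul_inv, ← sq,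
    inv_mul_eq_div] at hle
  exact (le_div_iff₀ (pow_pos hpos 2)).1 hle

lemma posDef_of_lambdaMin_pos {A : Matrix (Fin k) (Fin k) ℝ} (hA : A.IsSymm)
    (h : 0 < lambdaMin A) : A.PosDef :=
  .of_dotProduct_mulVec_pos ((conjTranspose_eq_transpose_of_trivial A).trans hA) fun u hu ↦
    (mul_pos h (pow_pos (vecNorm_pos_iff.2 hu) 2)).trans_le (lambdaMin_mul_sq_le A u)

lemma lambdaMin_sub_le (hk : 0 < k) {A B : Matrix (Fin k) (Fin k) ℝ} {C : ℝ}
    (h : ∀ u, vecNorm u = 1 → u ⬝ᵥ (A *ᵥ u) - u ⬝ᵥ (B *ᵥ u) ≤ C) :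
    lambdaMin A - lambdaMin B ≤ C := by
  obtain ⟨u₀, hu₀⟩ := exists_vecNorm_eq_one hk
  rw [sub_le_comm]
  refine le_csInf ⟨_, u₀, hu₀, rfl⟩ ?_
  rintro _ ⟨u, hu, rfl⟩
  linarith [lambdaMin_le A hu, h u hu]

end SmallestEigenvalue

section SpectralNorm

open scoped Matrix.Norms.L2Operator

lemma specNorm_eq_l2_opNorm {k : ℕ} (A : Matrix (Fin k) (Fin k) ℝ) : specNorm A = ‖A‖ := by
  rcases k.eq_zero_or_pos with rfl | hk
  · rw [Subsingleton.elim A 0, norm_zero]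
    simp [specNorm, vecNorm]
  have : NeZero k := ⟨hk.ne'⟩
  rw [← l2_opNorm_toEuclideanCLM, ← ContinuousLinearMap.sSup_sphere_eq_norm, specNorm]
  congr 1
  ext r
  constructor
  · rintro ⟨v, hv, rfl⟩
    exact ⟨WithLp.toLp 2 v, by simpa [vecNorm_eq_norm] using hv, by simp [vecNorm_eq_norm]⟩
  · rintro ⟨v, hv, rfl⟩
    exact ⟨v.ofLp, by simpa [vecNorm_eq_norm] using hv, by rw [vecNorm_eq_norm]; rfl⟩

lemma vecNorm_mulVec_le {k : ℕ} (A : Matrix (Fin k) (Fin k) ℝ) (v : Fin k → ℝ) :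
    vecNorm (A *ᵥ v) ≤ specNorm A * vecNorm v := by
  simpa only [specNorm_eq_l2_opNorm, vecNorm_eq_norm] using!
    l2_opNorm_mulVec A (WithLp.toLp 2 v)

lemma continuous_specNorm {k : ℕ} :
    Continuous (specNorm : Matrix (Fin k) (Fin k) ℝ → ℝ) := by
  simpa only [funext specNorm_eq_l2_opNorm] using continuous_norm

end SpectralNorm

/-- The matrix `M(u)` with entries `uᵀ Lᵢⱼ u` whose spectral norms define the pencil norm. -/
def rayleighMatrix {n m : ℕ} (L : Fin n → Fin n → Matrix (Fin m) (Fin m) ℝ) (u : Fin m → ℝ) :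
    Matrix (Fin n) (Fin n) ℝ :=
  Matrix.of fun i j ↦ u ⬝ᵥ (L i j *ᵥ u)

/-- The matrix `∑ₖ bₖ (Kₖ + δₖ(x))`, which for `Lᵢⱼ = Lⱼᵢ` is the derivative of `x ↦ p(x, xxᵀ)` at
`x` in the direction `b`. -/
def pencilDirDeriv {n m : ℕ} (K : Fin n → Matrix (Fin m) (Fin m) ℝ)
    (L : Fin n → Fin n → Matrix (Fin m) (Fin m) ℝ) (x b : Fin n → ℝ) :
    Matrix (Fin m) (Fin m) ℝ :=
  ∑ k, b k • (K k + deltaMat L k x)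

section Pencil

variable {n m : ℕ} {F0 : Matrix (Fin m) (Fin m) ℝ} (K : Fin n → Matrix (Fin m) (Fin m) ℝ)
  (L : Fin n → Fin n → Matrix (Fin m) (Fin m) ℝ)

lemma pencilNorm_nonneg : 0 ≤ pencilNorm L := by
  refine Real.sSup_nonneg ?_
  rintro _ ⟨u, -, rfl⟩
  exact Real.sSup_nonneg fun _ ⟨_, _, hr⟩ ↦ hr ▸ vecNorm_nonneg _

lemma specNorm_rayleighMatrix_le {u : Fin m → ℝ} (hu : vecNorm u = 1) :
    specNorm (rayleighMatrix L u) ≤ pencilNorm L := by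
  have hcont : Continuous fun u ↦ specNorm (rayleighMatrix L u) :=
    continuous_specNorm.comp (by unfold rayleighMatrix; fun_prop)
  exact le_csSup (bddAbove_vecNorm_sphere hcont) ⟨u, hu, rfl⟩

lemma dotProduct_rayleighMatrix_mulVec_le {b : Fin n → ℝ} {u : Fin m → ℝ} (hb : vecNorm b = 1)
    (hu : vecNorm u = 1) (v : Fin n → ℝ) :
    b ⬝ᵥ (rayleighMatrix L u *ᵥ v) ≤ pencilNorm L * vecNorm v :=
  calc b ⬝ᵥ (rayleighMatrix L u *ᵥ v)
      ≤ vecNorm b * vecNorm (rayleighMatrix L u *ᵥ v) := dotProduct_le_vecNorm_mul_vecNorm _ _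
    _ = vecNorm (rayleighMatrix L u *ᵥ v) := by rw [hb, one_mul]
    _ ≤ specNorm (rayleighMatrix L u) * vecNorm v := vecNorm_mulVec_le _ _
    _ ≤ pencilNorm L * vecNorm v :=
      mul_le_mul_of_nonneg_right (specNorm_rayleighMatrix_le L hu) (vecNorm_nonneg v)

lemma dotProduct_deltaMat_mulVec (k : Fin n) (x : Fin n → ℝ) (u : Fin m → ℝ) :
    u ⬝ᵥ (deltaMat L k x *ᵥ u) = 2 * (rayleighMatrix L u *ᵥ x) k := by
  rw [deltaMat, smul_mulVec, sum_mulVec, dotProduct_smul, dotProduct_sum, smul_eq_mul]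
  simp only [smul_mulVec, dotProduct_smul, smul_eq_mul, mul_comm (x _)]
  rfl

lemma dotProduct_pencilDirDeriv_mulVec (x b : Fin n → ℝ) (u : Fin m → ℝ) :
    u ⬝ᵥ (pencilDirDeriv K L x b *ᵥ u)
      = ∑ k, b k * (u ⬝ᵥ (K k *ᵥ u)) + 2 * (b ⬝ᵥ (rayleighMatrix L u *ᵥ x)) := by
  simp only [pencilDirDeriv, sum_mulVec, smul_mulVec, add_mulVec, dotProduct_sum, dotProduct_smul,
    dotProduct_add, smul_eq_mul, dotProduct_deltaMat_mulVec, mul_add, Finset.sum_add_distrib]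
  rw [dotProduct, Finset.mul_sum]
  simp only [mul_left_comm]

lemma rayleigh_neg_pencilDirDeriv_sub (x y b : Fin n → ℝ) (u : Fin m → ℝ) :
    u ⬝ᵥ (-pencilDirDeriv K L x b *ᵥ u) - u ⬝ᵥ (-pencilDirDeriv K L y b *ᵥ u)
      = 2 * (b ⬝ᵥ (rayleighMatrix L u *ᵥ (y - x))) := by
  simp only [neg_mulVec, dotProduct_neg, dotProduct_pencilDirDeriv_mulVec, mulVec_sub,
    dotProduct_sub]
  ring

lemma lambdaMin_neg_pencilDirDeriv_le_sFun (hm : 0 < m) (x : Fin n → ℝ) {b : Fin n → ℝ}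
    (hb : vecNorm b = 1) : lambdaMin (-pencilDirDeriv K L x b) ≤ sFun K L x := by
  obtain ⟨u₀, hu₀⟩ := exists_vecNorm_eq_one hm
  have hcont : Continuous fun b ↦ u₀ ⬝ᵥ (-pencilDirDeriv K L x b *ᵥ u₀) := by
    unfold pencilDirDeriv; fun_prop
  obtain ⟨B, hB⟩ := bddAbove_vecNorm_sphere hcont
  refine le_csSup ⟨B, ?_⟩ ⟨b, hb, rfl⟩
  rintro _ ⟨b, hb, rfl⟩
  exact (lambdaMin_le _ hu₀).trans (hB ⟨b, hb, rfl⟩)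

lemma sFun_sub_le_mul_vecNorm (hn : 0 < n) (hm : 0 < m) (x y : Fin n → ℝ) :
    sFun K L x - sFun K L y ≤ 2 * pencilNorm L * vecNorm (y - x) := by
  obtain ⟨b₀, hb₀⟩ := exists_vecNorm_eq_one hn
  rw [sub_le_iff_le_add']
  refine csSup_le ⟨_, b₀, hb₀, rfl⟩ ?_
  rintro _ ⟨b, hb, rfl⟩
  have hlambda : lambdaMin (-pencilDirDeriv K L x b) - lambdaMin (-pencilDirDeriv K L y b)
      ≤ 2 * pencilNorm L * vecNorm (y - x) := by
    refine lambdaMin_sub_le hm fun u hu ↦ ?_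
    rw [rayleigh_neg_pencilDirDeriv_sub, mul_assoc]
    exact mul_le_mul_of_nonneg_left (dotProduct_rayleighMatrix_mulVec_le L hb hu _) zero_le_two
  exact sub_le_iff_le_add.1 <| (sub_le_comm.1 hlambda).trans
    (lambdaMin_neg_pencilDirDeriv_le_sFun K L hm y hb)

variable {K L}

lemma distF_eq_infDist (x : Fin n → ℝ) :
    distF F0 K L x = Metric.infDist (WithLp.toLp 2 x) (WithLp.ofLp ⁻¹' feasSet F0 K L) := by
  rw [Metric.infDist_eq_iInf, ← sInf_range, distF]
  congr 1
  ext r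
  constructor
  · rintro ⟨a, ha, rfl⟩
    exact ⟨⟨WithLp.toLp 2 a, ha⟩, (vecNorm_sub_eq_dist x a).symm⟩
  · rintro ⟨⟨a, ha⟩, rfl⟩
    exact ⟨a.ofLp, ha, (vecNorm_sub_eq_dist x a.ofLp).symm⟩

lemma IsOptPen.vecNorm_sub_le {c xc x : Fin n → ℝ} {η : ℝ} (hη : 0 < η)
    (hx : IsOptPen F0 K L c xc η x) : vecNorm (x - xc) ≤ distF F0 K L xc + vecNorm c / η := by
  rw [vecNorm_sub_eq_dist, distF_eq_infDist, vecNorm_eq_norm]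
  refine dist_le_infDist_add_of_isMinOn (lipschitzWith_dotProduct c).lipschitzOnWith hη hx.1
    (isMinOn_iff.2 fun y hy ↦ ?_)
  simpa only [penObj, vecNorm_sub_eq_dist] using hx.2 y.ofLp hy

lemma IsOptPen.sFun_sub_le (hn : 0 < n) (hm : 0 < m) {c xc x : Fin n → ℝ} {η : ℝ} (hη : 0 < η)
    (hx : IsOptPen F0 K L c xc η x) :
    sFun K L xc - sFun K L x ≤ 2 * pencilNorm L * (distF F0 K L xc + vecNorm c / η) :=
  (sFun_sub_le_mul_vecNorm K L hn hm xc x).trans <|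
    mul_le_mul_of_nonneg_left (hx.vecNorm_sub_le hη) (mul_nonneg zero_le_two (pencilNorm_nonneg L))

lemma isSymm_pencilDirDeriv (hK : ∀ k, (K k).IsSymm) (hL : ∀ i j, (L i j).IsSymm)
    (x b : Fin n → ℝ) : (pencilDirDeriv K L x b).IsSymm := by
  simp only [Matrix.IsSymm, pencilDirDeriv, deltaMat, transpose_sum, transpose_smul,
    transpose_add, (hK _).eq, (hL _ _).eq]

lemma mfcq_of_sFun_pos (hK : ∀ k, (K k).IsSymm) (hL : ∀ i j, (L i j).IsSymm) {x : Fin n → ℝ}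
    (hx : x ∈ feasSet F0 K L) (hs : 0 < sFun K L x) : MFCQ F0 K L x := by
  obtain ⟨b, hb⟩ : ∃ b, 0 < lambdaMin (-pencilDirDeriv K L x b) := by
    by_contra! hcon
    refine hs.not_ge (Real.sSup_nonpos ?_)
    rintro _ ⟨b, -, rfl⟩
    exact hcon b
  have hpos := (posDef_of_lambdaMin_pos (isSymm_pencilDirDeriv hK hL x b).neg hb).posSemidef_add hx
  rw [← neg_add] at hpos
  exact ⟨b, hpos⟩

end Pencil

open Filter Topology

theorem bmi_lemma_three {n m : ℕ} (hn : 0 < n) (hm : 0 < m)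
    (F0 : Matrix (Fin m) (Fin m) ℝ)
    (K : Fin n → Matrix (Fin m) (Fin m) ℝ)
    (L : Fin n → Fin n → Matrix (Fin m) (Fin m) ℝ)
    (hF0 : F0.IsSymm) (hK : ∀ k, (K k).IsSymm)
    (hL : ∀ i j, (L i j).IsSymm) (hLsy : ∀ i j, L i j = L j i)
    (c xc : Fin n → ℝ)
    (hne : (feasSet F0 K L).Nonempty)
    (hgap : 2 * pencilNorm L * distF F0 K L xc < sFun K L xc) :
    ∀ ε > (0 : ℝ), ∃ η₀ > (0 : ℝ), ∀ η ≥ η₀,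
      ∀ xs : Fin n → ℝ, IsOptPen F0 K L c xc η xs →
        sFun K L xc - sFun K L xs ≤ 2 * pencilNorm L * distF F0 K L xc + ε ∧
        MFCQ F0 K L xs := by
  intro ε hε
  set P := pencilNorm L
  set d := distF F0 K L xc
  have hslack : 0 < min ε (sFun K L xc - 2 * P * d) := lt_min hε (sub_pos.2 hgap)
  have hvanish : Tendsto (fun η ↦ 2 * P * (vecNorm c / η)) atTop (𝓝 0) := by
    simpa using (tendsto_id.const_div_atTop (vecNorm c)).const_mul (2 * P)
  obtain ⟨η₀, hη₀⟩ :=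
    ((eventually_gt_atTop 0).and (hvanish.eventually_lt_const hslack)).exists_forall_of_atTop
  refine ⟨η₀, (hη₀ η₀ le_rfl).1, fun η hη xs hxs ↦ ?_⟩
  obtain ⟨hη_pos, hη_small⟩ := hη₀ η hη
  have hlt_ε : 2 * P * (vecNorm c / η) < ε := hη_small.trans_le (min_le_left _ _)
  have hlt_gap : 2 * P * (vecNorm c / η) < sFun K L xc - 2 * P * d :=
    hη_small.trans_le (min_le_right _ _)
  have hbound : sFun K L xc - sFun K L xs ≤ 2 * P * (d + vecNorm c / η) :=
    hxs.sFun_sub_le hn hm hη_pos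
  exact ⟨by linarith, mfcq_of_sFun_pos hK hL hxs.1 (by linarith)⟩
end
end
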